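/- (Main theorem) Let λ > 0, n ≥ 1, δ ∈ (0,1), α ∈ [0,1], and let P be a fixed prior on H. Then with probability at least 1−δ over draws of D_n, the following holds simultaneously for all posteriors Q on H: |R(π_Q) − R̂_n^α(π_Q)| ≤ √(KL1(π_Q)/(2n)) + B_n^α(π_Q) + KL2(π_Q)/(nλ) + (λ/2)·V̄_n^α(π_Q). -/

import Mathlib

open MeasureTheory ProbabilityTheory Real

open Classical in
/-- Kullback–Leibler divergence between two measures, valued in `ℝ≥0∞` (junk value `⊤` when
`Q` is not absolutely continuous w.r.t. `P` or the log-likelihood ratio is not integrable). -/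
noncomputable def klDiv {α : Type*} [MeasurableSpace α] (Q P : Measure α) : ENNReal :=
  if Q ≪ P ∧ Integrable (llr Q P) Q then ENNReal.ofReal (∫ x, llr Q P x ∂Q) else ⊤

/-! The risk and the IPS-α risk are compared through two empirical risks that use every action at
the observed contexts, one with cost `c` and one with the shrunken cost `c · π0 ^ (1 - α)`.

* From the risk to the first empirical risk only the contexts are sampled. The deviation `Δ` of a
  mean of `n` variables in `[-1, 0]` satisfies `E[exp(2nΔ²)] ≤ 2√n`: average its sub-Gaussian
  moment generating function over a Gaussian weight restricted to the range of `Δ`. The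
  Donsker–Varadhan change of measure and Markov's inequality make this uniform in `Q`.
* The two empirical risks differ by at most `B_n^α`, whatever the sample.
* The second empirical risk is the conditional mean of the IPS-α risk given the contexts. Since the
  losses are nonnegative, `exp(t - t²/2) ≤ 1 + t` and `exp(-t) ≤ 1 - t + t²/2` for `t ≥ 0` give
  exponential moments at most `1`, compensating the upper tail by the squared losses and the lower
  tail by their conditional second moment; the two compensators are the two terms of `V̄_n^α`.
-/

lemma exp_sub_sq_div_two_le_one_add {t : ℝ} (ht : 0 ≤ t) : exp (t - t ^ 2 / 2) ≤ 1 + t := by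
  have hlog : t - t ^ 2 / 2 ≤ log (1 + t) :=
    calc t - t ^ 2 / 2 ≤ 2 * t / (t + 2) := by
          rw [le_div_iff₀ (by positivity)]
          nlinarith [pow_nonneg ht 3]
      _ ≤ log (1 + t) := le_log_one_add_of_nonneg ht
  calc exp (t - t ^ 2 / 2) ≤ exp (log (1 + t)) := exp_le_exp.2 hlog
    _ = 1 + t := exp_log (by positivity)

lemma exp_neg_le_quadratic {t : ℝ} (ht : 0 ≤ t) : exp (-t) ≤ 1 - t + t ^ 2 / 2 := by
  rw [exp_neg, inv_le_iff_one_le_mul₀ (exp_pos t)]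
  have hpos : 0 ≤ 1 - t + t ^ 2 / 2 := by nlinarith [sq_nonneg (t - 1)]
  calc (1 : ℝ) ≤ (1 - t + t ^ 2 / 2) * (1 + t + t ^ 2 / 2) := by nlinarith [sq_nonneg (t ^ 2)]
    _ ≤ (1 - t + t ^ 2 / 2) * exp t := by gcongr; exact quadratic_le_exp_of_nonneg ht

lemma sq_one_sub_le_exp {w : ℝ} (hw : w ≤ 1) : (1 - w) ^ 2 ≤ exp (-2 * w) := by
  calc (1 - w) ^ 2 ≤ exp (-w) ^ 2 :=
        pow_le_pow_left₀ (sub_nonneg.2 hw) (one_sub_le_exp_neg w) 2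
    _ = exp (-2 * w) := by rw [← exp_nat_mul]; push_cast; ring_nf

lemma one_half_le_integral_exp_neg_two_mul_sq {x : ℝ} (hx : x ∈ Set.Icc (0 : ℝ) 1) :
    1 / 2 ≤ ∫ s in (0 : ℝ)..1, exp (-2 * (s - x) ^ 2) := by
  have hpoly : ∫ s in (0 : ℝ)..1, (1 - (s - x) ^ 2) ^ 2
      = 8 / 15 + x * (1 - x) + (x * (1 - x)) ^ 2 := by
    rw [intervalIntegral.integral_comp_sub_right (fun v : ℝ => (1 - v ^ 2) ^ 2) x]
    have hexpand : ∀ v : ℝ, (1 - v ^ 2) ^ 2 = 1 - 2 * v ^ 2 + v ^ 4 := fun v => by ring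
    simp only [hexpand]
    rw [intervalIntegral.integral_add, intervalIntegral.integral_sub]
    · simp
      ring
    all_goals exact Continuous.intervalIntegrable (by fun_prop) _ _
  have hx' : 0 ≤ x * (1 - x) := mul_nonneg hx.1 (sub_nonneg.2 hx.2)
  calc (1 : ℝ) / 2 ≤ ∫ s in (0 : ℝ)..1, (1 - (s - x) ^ 2) ^ 2 := by rw [hpoly]; nlinarith
    _ ≤ ∫ s in (0 : ℝ)..1, exp (-2 * (s - x) ^ 2) := by
        refine intervalIntegral.integral_mono_on zero_le_one
          (Continuous.intervalIntegrable (by fun_prop) _ _)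
          (Continuous.intervalIntegrable (by fun_prop) _ _) fun s hs => sq_one_sub_le_exp ?_
        nlinarith [hs.1, hs.2, hx.1, hx.2]

lemma le_integral_gaussian_of_mem_Icc {σ a b y : ℝ} (hσ : 0 < σ) (hab : 2 * σ ≤ b - a)
    (hy : y ∈ Set.Icc a b) :
    σ ≤ ∫ u in a..b, exp (-(u - y) ^ 2 / (2 * σ ^ 2)) := by
  -- A window `[m, m + 2σ] ⊆ [a, b]` of width two standard deviations that still contains `y`.
  obtain ⟨m, ham, hmb, hmy, hym⟩ : ∃ m, a ≤ m ∧ m + 2 * σ ≤ b ∧ m ≤ y ∧ y ≤ m + 2 * σ := by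
    refine ⟨max a (y - 2 * σ), le_max_left _ _, ?_, max_le hy.1 (by linarith), ?_⟩
    · rw [← le_sub_iff_add_le]
      exact max_le (by linarith) (by linarith [hy.2])
    · linarith [le_max_right a (y - 2 * σ)]
  have hunit : (y - m) / (2 * σ) ∈ Set.Icc (0 : ℝ) 1 :=
    ⟨div_nonneg (by linarith) (by positivity), (div_le_one (by positivity)).2 (by linarith)⟩
  calc σ = 2 * σ * (1 / 2) := by ring
    _ ≤ 2 * σ * ∫ s in (0 : ℝ)..1, exp (-2 * (s - (y - m) / (2 * σ)) ^ 2) := by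
        gcongr
        exact one_half_le_integral_exp_neg_two_mul_sq hunit
    _ = 2 * σ * ∫ s in (0 : ℝ)..1, exp (-(m + 2 * σ * s - y) ^ 2 / (2 * σ ^ 2)) := by
        congr! 4 with s
        field_simp
        ring
    _ = ∫ u in m..(m + 2 * σ), exp (-(u - y) ^ 2 / (2 * σ ^ 2)) := by
        simpa using intervalIntegral.mul_integral_comp_add_mul (a := 0) (b := 1)
          (f := fun u => exp (-(u - y) ^ 2 / (2 * σ ^ 2))) (2 * σ) m
    _ ≤ ∫ u in a..b, exp (-(u - y) ^ 2 / (2 * σ ^ 2)) :=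
        intervalIntegral.integral_mono_interval ham (by linarith) hmb
          (Filter.Eventually.of_forall fun _ => (exp_pos _).le)
          (Continuous.intervalIntegrable (by fun_prop) _ _)

lemma lintegral_exp_mul_le_of_hasSubgaussianMGF {Ω : Type*} [MeasurableSpace Ω] {μ : Measure Ω}
    {Y : Ω → ℝ} {v : NNReal} (hY : HasSubgaussianMGF Y v μ) (t : ℝ) :
    ∫⁻ ω, ENNReal.ofReal (exp (t * Y ω)) ∂μ ≤ ENNReal.ofReal (exp (v * t ^ 2 / 2)) := by
  rw [← ofReal_integral_eq_lintegral_ofReal (hY.integrable_exp_mul t)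
    (Filter.Eventually.of_forall fun _ => (exp_pos _).le)]
  exact ENNReal.ofReal_le_ofReal (hY.mgf_le t)

lemma ofReal_mul_exp_sq_le_setLIntegral {σ a b y : ℝ} (hσ : 0 < σ) (hab : 2 * σ ≤ b - a)
    (hy : y ∈ Set.Icc a b) :
    ENNReal.ofReal (σ * exp (y ^ 2 / (2 * σ ^ 2))) ≤ ∫⁻ u in Set.Ioc a b,
      ENNReal.ofReal (exp (-u ^ 2 / (2 * σ ^ 2))) * ENNReal.ofReal (exp (u / σ ^ 2 * y)) := by
  have hsplit : ∀ u, exp (-u ^ 2 / (2 * σ ^ 2)) * exp (u / σ ^ 2 * y) =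
      exp (-(u - y) ^ 2 / (2 * σ ^ 2)) * exp (y ^ 2 / (2 * σ ^ 2)) := fun u => by
    rw [← exp_add, ← exp_add]
    congr 1
    field_simp
    ring
  simp only [← ENNReal.ofReal_mul (exp_pos _).le, hsplit]
  rw [← ofReal_integral_eq_lintegral_ofReal (Continuous.integrableOn_Ioc (by fun_prop))
      (Filter.Eventually.of_forall fun _ => by positivity),
    ← intervalIntegral.integral_of_le (by linarith), intervalIntegral.integral_mul_const]
  gcongr
  exact le_integral_gaussian_of_mem_Icc hσ hab hy

lemma lintegral_exp_sq_le_of_hasSubgaussianMGF {Ω : Type*} [MeasurableSpace Ω] {μ : Measure Ω}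
    [SFinite μ] {Y : Ω → ℝ} {σ : NNReal} {a b : ℝ} (hY : HasSubgaussianMGF Y (σ ^ 2) μ)
    (hσ : 0 < σ) (hab : 2 * σ ≤ b - a) (hmem : ∀ ω, Y ω ∈ Set.Icc a b) :
    ∫⁻ ω, ENNReal.ofReal (exp (Y ω ^ 2 / (2 * σ ^ 2))) ∂μ ≤ ENNReal.ofReal ((b - a) / σ) := by
  have hσ' : (0 : ℝ) < σ := hσ
  have hmoment : ∀ u : ℝ, ENNReal.ofReal (exp (-u ^ 2 / (2 * σ ^ 2))) *
      ∫⁻ ω, ENNReal.ofReal (exp (u / σ ^ 2 * Y ω)) ∂μ ≤ 1 := fun u =>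
    calc _ ≤ ENNReal.ofReal (exp (-u ^ 2 / (2 * σ ^ 2))) *
          ENNReal.ofReal (exp (↑(σ ^ 2) * (u / σ ^ 2) ^ 2 / 2)) := by
            gcongr
            exact lintegral_exp_mul_le_of_hasSubgaussianMGF hY _
      _ = 1 := by
            rw [← ENNReal.ofReal_mul (exp_pos _).le, ← exp_add, ENNReal.ofReal_eq_one,
              exp_eq_one_iff]
            push_cast
            field_simp
            ring
  have hYm := hY.aemeasurable
  have hmix : ENNReal.ofReal σ * ∫⁻ ω, ENNReal.ofReal (exp (Y ω ^ 2 / (2 * σ ^ 2))) ∂μ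
      ≤ ENNReal.ofReal (b - a) :=
    calc _ = ∫⁻ ω, ENNReal.ofReal (σ * exp (Y ω ^ 2 / (2 * σ ^ 2))) ∂μ := by
          rw [← lintegral_const_mul' _ _ ENNReal.ofReal_ne_top]
          simp only [ENNReal.ofReal_mul hσ'.le]
      _ ≤ ∫⁻ ω, ∫⁻ u in Set.Ioc a b, ENNReal.ofReal (exp (-u ^ 2 / (2 * σ ^ 2))) *
            ENNReal.ofReal (exp (u / σ ^ 2 * Y ω)) ∂volume ∂μ :=
          lintegral_mono fun ω => ofReal_mul_exp_sq_le_setLIntegral hσ' hab (hmem ω)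
      _ = ∫⁻ u in Set.Ioc a b, ENNReal.ofReal (exp (-u ^ 2 / (2 * σ ^ 2))) *
            ∫⁻ ω, ENNReal.ofReal (exp (u / σ ^ 2 * Y ω)) ∂μ := by
          rw [lintegral_lintegral_swap]
          · simp only [lintegral_const_mul' _ _ ENNReal.ofReal_ne_top]
          · have := hYm.comp_fst (ν := volume.restrict (Set.Ioc a b))
            simp only [Function.uncurry_def]
            fun_prop
      _ ≤ ∫⁻ _ in Set.Ioc a b, 1 := lintegral_mono hmoment
      _ = ENNReal.ofReal (b - a) := by simp
  rw [ENNReal.ofReal_div_of_pos hσ',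
    ENNReal.le_div_iff_mul_le (.inl (by simpa using hσ.ne')) (.inl ENNReal.ofReal_ne_top), mul_comm]
  exact hmix

lemma sampleMean_mem_Icc {a b : ℝ} {n : ℕ} (hn : 0 < n) {x : Fin n → ℝ}
    (hx : ∀ i, x i ∈ Set.Icc a b) : (n : ℝ)⁻¹ * ∑ i, x i ∈ Set.Icc a b := by
  have hn' : (n : ℝ) ≠ 0 := by exact_mod_cast hn.ne'
  rw [Finset.mul_sum]
  exact (convex_Icc a b).sum_mem (w := fun _ => (n : ℝ)⁻¹)
    (fun _ _ => inv_nonneg.2 n.cast_nonneg) (by simp [hn']) fun i _ => hx i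

lemma hasSubgaussianMGF_sampleMean_sub {Z : Type*} [MeasurableSpace Z] {μ : Measure Z}
    [IsProbabilityMeasure μ] {a b : ℝ} {ℓ : Z → ℝ} (hℓ : Measurable ℓ)
    (hmem : ∀ z, ℓ z ∈ Set.Icc a b) {n : ℕ} (hn : 0 < n) :
    HasSubgaussianMGF (fun ω : Fin n → Z => (n : ℝ)⁻¹ * ∑ i, ℓ (ω i) - ∫ z, ℓ z ∂μ)
      ((‖b - a‖₊ / (2 * NNReal.sqrt n)) ^ 2) (Measure.pi fun _ => μ) := by
  have hcoord (i : Fin n) : HasSubgaussianMGF (fun ω : Fin n → Z => ℓ (ω i) - ∫ z, ℓ z ∂μ)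
      ((‖b - a‖₊ / 2) ^ 2) (Measure.pi fun _ => μ) := by
    have hmean : ∫ ω : Fin n → Z, ℓ (ω i) ∂(Measure.pi fun _ => μ) = ∫ z, ℓ z ∂μ :=
      integral_comp_eval hℓ.aestronglyMeasurable
    rw [← hmean]
    exact hasSubgaussianMGF_of_mem_Icc (hℓ.comp (measurable_pi_apply i)).aemeasurable
      (Filter.Eventually.of_forall fun _ => hmem _)
  have hindep : iIndepFun (fun (i : Fin n) (ω : Fin n → Z) => ℓ (ω i) - ∫ z, ℓ z ∂μ)
      (Measure.pi fun _ => μ) :=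
    iIndepFun_pi fun _ => (hℓ.sub_const _).aemeasurable
  have hsum := (HasSubgaussianMGF.sum_of_iIndepFun hindep (s := Finset.univ)
    fun i _ => hcoord i).const_mul (n : ℝ)⁻¹
  convert hsum using 1
  · ext ω
    rw [Finset.sum_sub_distrib, mul_sub]
    simp [hn.ne']
  · have hn' : (n : NNReal) ≠ 0 := by exact_mod_cast hn.ne'
    change _ = (n : NNReal)⁻¹ ^ 2 * ∑ _ : Fin n, (‖b - a‖₊ / 2) ^ 2
    simp only [Finset.sum_const, Finset.card_univ, Fintype.card_fin, nsmul_eq_mul, div_pow,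
      mul_pow, NNReal.sq_sqrt]
    field_simp

lemma lintegral_exp_sq_sampleMean_sub_le {Z : Type*} [MeasurableSpace Z] {μ : Measure Z}
    [IsProbabilityMeasure μ] {a b : ℝ} (hab : a < b) {ℓ : Z → ℝ} (hℓ : Measurable ℓ)
    (hmem : ∀ z, ℓ z ∈ Set.Icc a b) {n : ℕ} (hn : 0 < n) :
    ∫⁻ ω : Fin n → Z, ENNReal.ofReal
        (exp (2 * n / (b - a) ^ 2 * ((n : ℝ)⁻¹ * ∑ i, ℓ (ω i) - ∫ z, ℓ z ∂μ) ^ 2))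
      ∂(Measure.pi fun _ => μ) ≤ ENNReal.ofReal (2 * √n) := by
  have hba : 0 < b - a := sub_pos.2 hab
  have hn' : (1 : ℝ) ≤ n := by exact_mod_cast hn
  have hsub := hasSubgaussianMGF_sampleMean_sub (μ := μ) hℓ hmem hn
  set σ : NNReal := ‖b - a‖₊ / (2 * NNReal.sqrt n)
  have hσ : (σ : ℝ) = (b - a) / (2 * √n) := by simp [σ, abs_of_pos hba]
  have hσ_pos : (0 : ℝ) < σ := by rw [hσ]; positivity
  have hσ_sq : (σ : ℝ) ^ 2 = (b - a) ^ 2 / (4 * n) := by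
    rw [hσ, div_pow, mul_pow, sq_sqrt (by positivity)]
    norm_num
  have hwidth : 2 * (σ : ℝ) ≤ b - ∫ z, ℓ z ∂μ - (a - ∫ z, ℓ z ∂μ) := by
    have hsqrt : 1 ≤ √(n : ℝ) := one_le_sqrt.2 hn'
    calc 2 * (σ : ℝ) = (b - a) / √n := by rw [hσ]; ring
      _ ≤ b - ∫ z, ℓ z ∂μ - (a - ∫ z, ℓ z ∂μ) := by
        rw [sub_sub_sub_cancel_right]
        exact div_le_self hba.le hsqrt
  have hmean (ω : Fin n → Z) : (n : ℝ)⁻¹ * ∑ i, ℓ (ω i) - ∫ z, ℓ z ∂μ ∈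
      Set.Icc (a - ∫ z, ℓ z ∂μ) (b - ∫ z, ℓ z ∂μ) :=
    have h := sampleMean_mem_Icc hn fun i => hmem (ω i)
    ⟨sub_le_sub_right h.1 _, sub_le_sub_right h.2 _⟩
  have hexponent : 2 * (n : ℝ) / (b - a) ^ 2 = (2 * (σ : ℝ) ^ 2)⁻¹ := by
    rw [hσ_sq]
    field_simp
    norm_num
  have hratio : (b - ∫ z, ℓ z ∂μ - (a - ∫ z, ℓ z ∂μ)) / (σ : ℝ) = 2 * √n := by
    rw [hσ, sub_sub_sub_cancel_right]
    field_simp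
  simpa only [hexponent, hratio, inv_mul_eq_div] using
    lintegral_exp_sq_le_of_hasSubgaussianMGF hsub hσ_pos hwidth hmean

section ChangeOfMeasure

variable {H Ω : Type*} [MeasurableSpace H] [MeasurableSpace Ω]

lemma klDiv_ne_top_iff {Q P : Measure H} : klDiv Q P ≠ ⊤ ↔ Q ≪ P ∧ Integrable (llr Q P) Q := by
  unfold klDiv
  split_ifs with h <;> simp [h]

lemma integral_llr_le_toReal_klDiv {Q P : Measure H} (hkl : klDiv Q P ≠ ⊤) :
    ∫ h, llr Q P h ∂Q ≤ (klDiv Q P).toReal := by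
  rw [klDiv, if_pos (klDiv_ne_top_iff.1 hkl), ENNReal.toReal_ofReal']
  exact le_max_left _ _

lemma integral_le_toReal_klDiv_add_log_integral_exp {Q P : Measure H} [IsProbabilityMeasure Q]
    [IsProbabilityMeasure P] (hkl : klDiv Q P ≠ ⊤) {f : H → ℝ} (hfQ : Integrable f Q)
    (hfP : Integrable (fun h => exp (f h)) P) :
    ∫ h, f h ∂Q ≤ (klDiv Q P).toReal + log (∫ h, exp (f h) ∂P) := by
  obtain ⟨hac, hllr⟩ := klDiv_ne_top_iff.1 hkl
  have : IsProbabilityMeasure (P.tilted f) := isProbabilityMeasure_tilted hfP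
  have hgibbs : 0 ≤ ∫ h, llr Q (P.tilted f) h ∂Q := by
    simpa using InformationTheory.integral_llr_add_sub_measure_univ_nonneg
      (hac.trans (absolutelyContinuous_tilted hfP))
      (integrable_llr_tilted_right hac hfQ hllr hfP)
  rw [integral_llr_tilted_right hac hfQ hfP hllr] at hgibbs
  linarith [integral_llr_le_toReal_klDiv hkl]

lemma integral_le_toReal_klDiv_add_log {Q P : Measure H} [IsProbabilityMeasure Q]
    [IsProbabilityMeasure P] (hkl : klDiv Q P ≠ ⊤) {f : H → ℝ} (hf : Measurable f)
    (hfQ : Integrable f Q) {B : ℝ} (hB : 0 ≤ B)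
    (hexp : ∫⁻ h, ENNReal.ofReal (exp (f h)) ∂P ≤ ENNReal.ofReal B) :
    ∫ h, f h ∂Q ≤ (klDiv Q P).toReal + log B := by
  have hpos : 0 ≤ᵐ[P] fun h => exp (f h) := Filter.Eventually.of_forall fun _ => (exp_pos _).le
  have hfP : Integrable (fun h => exp (f h)) P :=
    ⟨hf.exp.aestronglyMeasurable,
      (hasFiniteIntegral_iff_ofReal hpos).2 (hexp.trans_lt ENNReal.ofReal_lt_top)⟩
  have hle : ∫ h, exp (f h) ∂P ≤ B := by
    rw [integral_eq_lintegral_of_nonneg_ae hpos hf.exp.aestronglyMeasurable]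
    exact ENNReal.toReal_le_of_le_ofReal hB hexp
  calc ∫ h, f h ∂Q ≤ (klDiv Q P).toReal + log (∫ h, exp (f h) ∂P) :=
        integral_le_toReal_klDiv_add_log_integral_exp hkl hfQ hfP
    _ ≤ (klDiv Q P).toReal + log B := by
        gcongr
        exact integral_exp_pos hfP

/-- The event that `p Q` holds simultaneously for all posteriors `Q`, that is, for all probability
measures at finite Kullback–Leibler divergence from the prior `P`. At infinite divergence a
PAC-Bayes bound is void. -/
def posteriorEvent (P : Measure H) (p : Measure H → Ω → Prop) : Set Ω :=
  {ω | ∀ Q : Measure H, IsProbabilityMeasure Q → klDiv Q P ≠ ⊤ → p Q ω}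

lemma measure_compl_posteriorEvent_mono {μ : Measure Ω} {P : Measure H}
    {p q : Measure H → Ω → Prop} (hpq : ∀ Q ω, IsProbabilityMeasure Q → p Q ω → q Q ω) :
    μ (posteriorEvent P q)ᶜ ≤ μ (posteriorEvent P p)ᶜ :=
  measure_mono (Set.compl_subset_compl.2 fun ω hω Q hQ hkl => hpq Q ω hQ (hω Q hQ hkl))

lemma measure_compl_posteriorEvent_le_of_half {μ : Measure Ω} {P : Measure H} {ε : ℝ} (hε : 0 ≤ ε)
    {p q r : Measure H → Ω → Prop} (hp : μ (posteriorEvent P p)ᶜ ≤ ENNReal.ofReal (ε / 2))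
    (hq : μ (posteriorEvent P q)ᶜ ≤ ENNReal.ofReal (ε / 2))
    (hpqr : ∀ Q ω, IsProbabilityMeasure Q → p Q ω → q Q ω → r Q ω) :
    μ (posteriorEvent P r)ᶜ ≤ ENNReal.ofReal ε := by
  have hsub : posteriorEvent P p ∩ posteriorEvent P q ⊆ posteriorEvent P r :=
    fun ω hω Q hQ hkl => hpqr Q ω hQ (hω.1 Q hQ hkl) (hω.2 Q hQ hkl)
  calc μ (posteriorEvent P r)ᶜ ≤ μ (posteriorEvent P p ∩ posteriorEvent P q)ᶜ :=
        measure_mono (Set.compl_subset_compl.2 hsub)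
    _ ≤ μ (posteriorEvent P p)ᶜ + μ (posteriorEvent P q)ᶜ := by
        rw [Set.compl_inter]
        exact measure_union_le _ _
    _ ≤ ENNReal.ofReal (ε / 2) + ENNReal.ofReal (ε / 2) := add_le_add hp hq
    _ = ENNReal.ofReal ε := by
        rw [← ENNReal.ofReal_add (by positivity) (by positivity), add_halves]

lemma measure_compl_posteriorEvent_le {μ : Measure Ω} [SFinite μ] {P : Measure H}
    [IsProbabilityMeasure P] {f : H → Ω → ℝ} (hf : Measurable fun q : H × Ω => f q.1 q.2)
    {C ε : ℝ} (hC : 0 < C) (hε : 0 < ε)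
    (hexp : ∀ h, ∫⁻ ω, ENNReal.ofReal (exp (f h ω)) ∂μ ≤ ENNReal.ofReal C) :
    μ (posteriorEvent P fun Q ω => Integrable (f · ω) Q →
      ∫ h, f h ω ∂Q ≤ (klDiv Q P).toReal + log (C / ε))ᶜ ≤ ENNReal.ofReal ε := by
  have hf_exp : Measurable fun q : H × Ω => ENNReal.ofReal (exp (f q.1 q.2)) := by fun_prop
  have hmoment : ∫⁻ ω, ∫⁻ h, ENNReal.ofReal (exp (f h ω)) ∂P ∂μ ≤ ENNReal.ofReal C := by
    rw [lintegral_lintegral_swap (f := fun ω h => ENNReal.ofReal (exp (f h ω)))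
      (hf_exp.comp measurable_swap).aemeasurable]
    calc _ ≤ ∫⁻ _, ENNReal.ofReal C ∂P := lintegral_mono hexp
      _ = ENNReal.ofReal C := by simp
  have hsub : (posteriorEvent P fun Q ω => Integrable (f · ω) Q →
      ∫ h, f h ω ∂Q ≤ (klDiv Q P).toReal + log (C / ε))ᶜ ⊆
      {ω | ENNReal.ofReal (C / ε) ≤ ∫⁻ h, ENNReal.ofReal (exp (f h ω)) ∂P} := by
    refine Set.compl_subset_comm.1 fun ω hω Q _ hkl hfQ => ?_
    exact integral_le_toReal_klDiv_add_log hkl (hf.comp measurable_prodMk_right) hfQ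
      (by positivity) (le_of_not_ge hω)
  calc _ ≤ μ {ω | ENNReal.ofReal (C / ε) ≤ ∫⁻ h, ENNReal.ofReal (exp (f h ω)) ∂P} :=
        measure_mono hsub
    _ ≤ (∫⁻ ω, ∫⁻ h, ENNReal.ofReal (exp (f h ω)) ∂P ∂μ) / ENNReal.ofReal (C / ε) :=
        meas_ge_le_lintegral_div (hf_exp.lintegral_prod_left').aemeasurable
          (ENNReal.ofReal_pos.2 (by positivity)).ne' ENNReal.ofReal_ne_top
    _ ≤ ENNReal.ofReal C / ENNReal.ofReal (C / ε) := by gcongr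
    _ = ENNReal.ofReal ε := by
        rw [← ENNReal.ofReal_div_of_pos (by positivity), div_div_cancel₀ hC.ne']

end ChangeOfMeasure

lemma lintegral_exp_sum_pi {Z : Type*} [MeasurableSpace Z] {μ : Measure Z}
    [IsProbabilityMeasure μ] {n : ℕ} {f : Z → ℝ} (hf : Measurable f) :
    ∫⁻ ω : Fin n → Z, ENNReal.ofReal (exp (∑ i, f (ω i))) ∂(Measure.pi fun _ => μ) =
      (∫⁻ z, ENNReal.ofReal (exp (f z)) ∂μ) ^ n := by
  have hexp : Measurable fun z => ENNReal.ofReal (exp (f z)) := by fun_prop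
  simp only [exp_sum, ENNReal.ofReal_prod_of_nonneg fun _ _ => (exp_pos _).le]
  rw [lintegral_prod_eq_prod_lintegral_of_indepFun Finset.univ _
    (iIndepFun_pi fun _ => hexp.aemeasurable) fun i => hexp.comp (measurable_pi_apply i)]
  simp [fun i : Fin n => (measurePreserving_eval (fun _ : Fin n => μ) i).lintegral_comp hexp]

section BoundedLoss

variable {H Z : Type*} [MeasurableSpace H] [MeasurableSpace Z]

lemma measurable_sampleMean_sub_integral {μ : Measure Z} [SFinite μ] {ℓ : H → Z → ℝ}
    (hℓ : Measurable fun q : H × Z => ℓ q.1 q.2) {n : ℕ} :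
    Measurable fun q : H × (Fin n → Z) =>
      (n : ℝ)⁻¹ * ∑ i, ℓ q.1 (q.2 i) - ∫ z, ℓ q.1 z ∂μ := by
  have hsample (i : Fin n) : Measurable fun q : H × (Fin n → Z) => ℓ q.1 (q.2 i) :=
    hℓ.comp (by fun_prop : Measurable fun q : H × (Fin n → Z) => (q.1, q.2 i))
  have hmean : Measurable fun h => ∫ z, ℓ h z ∂μ :=
    hℓ.stronglyMeasurable.integral_prod_right.measurable
  exact ((Finset.univ.measurable_sum fun i _ => hsample i).const_mul _).sub
    (hmean.comp measurable_fst)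

lemma integral_mem_Icc_of_mem_Icc {μ : Measure Z} [IsProbabilityMeasure μ] {f : Z → ℝ}
    (hf : Measurable f) {a b : ℝ} (hmem : ∀ z, f z ∈ Set.Icc a b) : ∫ z, f z ∂μ ∈ Set.Icc a b :=
  (convex_Icc a b).integral_mem isClosed_Icc (Filter.Eventually.of_forall hmem)
    (Integrable.of_mem_Icc a b hf.aemeasurable (Filter.Eventually.of_forall hmem))

lemma abs_integral_le_sqrt_integral_sq {Q : Measure H} [IsProbabilityMeasure Q] {f : H → ℝ}
    (hf : MemLp f 2 Q) : |∫ h, f h ∂Q| ≤ √(∫ h, f h ^ 2 ∂Q) := by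
  refine abs_le_sqrt (sub_nonneg.1 ?_)
  have h := variance_nonneg f Q
  rwa [variance_eq_sub hf] at h

theorem measure_compl_posteriorEvent_abs_integral_sampleMean_sub_le {μ : Measure Z}
    [IsProbabilityMeasure μ] {P : Measure H} [IsProbabilityMeasure P] {a b : ℝ} (hab : a < b)
    {ℓ : H → Z → ℝ} (hℓ : Measurable fun q : H × Z => ℓ q.1 q.2)
    (hmem : ∀ h z, ℓ h z ∈ Set.Icc a b) {n : ℕ} (hn : 0 < n) {ε : ℝ} (hε : 0 < ε) :
    (Measure.pi fun _ : Fin n => μ) (posteriorEvent P fun Q ω =>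
      |∫ h, ((n : ℝ)⁻¹ * ∑ i, ℓ h (ω i) - ∫ z, ℓ h z ∂μ) ∂Q| ≤
        (b - a) * √(((klDiv Q P).toReal + log (2 * √n / ε)) / (2 * n)))ᶜ ≤
      ENNReal.ofReal ε := by
  have hba : 0 < b - a := sub_pos.2 hab
  set D : H → (Fin n → Z) → ℝ := fun h ω => (n : ℝ)⁻¹ * ∑ i, ℓ h (ω i) - ∫ z, ℓ h z ∂μ
  have hD_meas : Measurable fun q : H × (Fin n → Z) => D q.1 q.2 :=
    measurable_sampleMean_sub_integral hℓ
  have hD_mem (h : H) (ω : Fin n → Z) : D h ω ∈ Set.Icc (a - b) (b - a) := by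
    have hmean : ∫ z, ℓ h z ∂μ ∈ Set.Icc a b :=
      integral_mem_Icc_of_mem_Icc (hℓ.comp measurable_prodMk_left) (hmem h)
    have hsample := sampleMean_mem_Icc hn fun i => hmem h (ω i)
    exact ⟨by linarith [hsample.1, hmean.2], by linarith [hsample.2, hmean.1]⟩
  refine (measure_compl_posteriorEvent_mono fun Q ω _ hQ => ?_).trans
    (measure_compl_posteriorEvent_le (f := fun h ω => 2 * n / (b - a) ^ 2 * D h ω ^ 2)
      (by fun_prop) (by positivity : 0 < 2 * √(n : ℝ)) hε
      fun h => lintegral_exp_sq_sampleMean_sub_le hab (hℓ.comp measurable_prodMk_left) (hmem h) hn)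
  have hD_memLp : MemLp (D · ω) 2 Q :=
    memLp_of_bounded (Filter.Eventually.of_forall fun h => hD_mem h ω)
      (hD_meas.comp measurable_prodMk_right).aestronglyMeasurable 2
  have hsq := hQ (hD_memLp.integrable_sq.const_mul _)
  rw [integral_const_mul] at hsq
  calc |∫ h, D h ω ∂Q| ≤ √(∫ h, D h ω ^ 2 ∂Q) := abs_integral_le_sqrt_integral_sq hD_memLp
    _ ≤ √((b - a) ^ 2 * (((klDiv Q P).toReal + log (2 * √n / ε)) / (2 * n))) := by
        gcongr
        rw [mul_div_assoc', le_div_iff₀ (by positivity), ← div_le_iff₀' (by positivity)]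
        refine le_of_eq_of_le ?_ hsq
        field_simp
    _ = (b - a) * √(((klDiv Q P).toReal + log (2 * √n / ε)) / (2 * n)) := by
        rw [sqrt_mul (sq_nonneg _), sqrt_sq hba.le]

end BoundedLoss

section SelfNormalized

lemma lintegral_exp_sub_integral_sub_sq_le_one {Y : Type*} [MeasurableSpace Y] {μ : Measure Y}
    [IsProbabilityMeasure μ] {W : Y → ℝ} (hW : ∀ y, 0 ≤ W y) (hint : Integrable W μ) :
    ∫⁻ y, ENNReal.ofReal (exp (W y - ∫ y, W y ∂μ - W y ^ 2 / 2)) ∂μ ≤ 1 := by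
  set m := ∫ y, W y ∂μ
  calc _ ≤ ∫⁻ y, ENNReal.ofReal (exp (-m) * (1 + W y)) ∂μ := by
        refine lintegral_mono fun y => ENNReal.ofReal_le_ofReal ?_
        calc exp (W y - m - W y ^ 2 / 2) = exp (-m) * exp (W y - W y ^ 2 / 2) := by
              rw [← exp_add]
              ring_nf
          _ ≤ exp (-m) * (1 + W y) := by
              gcongr
              exact exp_sub_sq_div_two_le_one_add (hW y)
    _ = ENNReal.ofReal (exp (-m) * (1 + m)) := by
        have hadd : Integrable (fun y => 1 + W y) μ := (integrable_const 1).add hint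
        rw [← ofReal_integral_eq_lintegral_ofReal (hadd.const_mul _)
          (Filter.Eventually.of_forall fun y => mul_nonneg (exp_pos _).le
            (add_nonneg zero_le_one (hW y))), integral_const_mul,
          integral_add (integrable_const _) hint]
        simp [m]
    _ ≤ 1 := by
        rw [ENNReal.ofReal_le_one, exp_neg, inv_mul_le_one₀ (exp_pos m), add_comm]
        exact add_one_le_exp m

lemma lintegral_exp_integral_sub_sub_integral_sq_le_one {Y : Type*} [MeasurableSpace Y]
    {μ : Measure Y} [IsProbabilityMeasure μ] {W : Y → ℝ} (hW : ∀ y, 0 ≤ W y) (hL2 : MemLp W 2 μ) :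
    ∫⁻ y, ENNReal.ofReal (exp (∫ y, W y ∂μ - W y - (∫ y, W y ^ 2 ∂μ) / 2)) ∂μ ≤ 1 := by
  have hint : Integrable W μ := hL2.integrable one_le_two
  set m := ∫ y, W y ∂μ
  set s := ∫ y, W y ^ 2 ∂μ
  calc _ ≤ ∫⁻ y, ENNReal.ofReal (exp (m - s / 2) * (1 - W y + W y ^ 2 / 2)) ∂μ := by
        refine lintegral_mono fun y => ENNReal.ofReal_le_ofReal ?_
        calc exp (m - W y - s / 2) = exp (m - s / 2) * exp (-W y) := by
              rw [← exp_add]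
              ring_nf
          _ ≤ exp (m - s / 2) * (1 - W y + W y ^ 2 / 2) := by
              gcongr
              exact exp_neg_le_quadratic (hW y)
    _ = ENNReal.ofReal (exp (m - s / 2) * (1 - m + s / 2)) := by
        have hsub : Integrable (fun y => 1 - W y) μ := (integrable_const _).sub hint
        have hsq : Integrable (fun y => W y ^ 2 / 2) μ := hL2.integrable_sq.div_const _
        have hadd : Integrable (fun y => 1 - W y + W y ^ 2 / 2) μ := hsub.add hsq
        rw [← ofReal_integral_eq_lintegral_ofReal (hadd.const_mul _)
          (Filter.Eventually.of_forall fun y => mul_nonneg (exp_pos _).le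
            ((exp_pos _).le.trans (exp_neg_le_quadratic (hW y)))), integral_const_mul,
          integral_add hsub hsq, integral_sub (integrable_const _) hint, integral_div]
        simp [m, s]
    _ ≤ 1 := by
        rw [ENNReal.ofReal_le_one]
        calc exp (m - s / 2) * (1 - m + s / 2) ≤ exp (m - s / 2) * exp (-(m - s / 2)) := by
              gcongr
              linarith [add_one_le_exp (-(m - s / 2))]
          _ = 1 := by rw [← exp_add, add_neg_cancel, exp_zero]

variable {X Y : Type*} [MeasurableSpace X] [MeasurableSpace Y]

/-- The deviation of `W (x, y)` from its conditional mean given `x`, where `y ∼ κ x`. -/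
noncomputable def condDeviation (κ : Kernel X Y) (W : X × Y → ℝ) (z : X × Y) : ℝ :=
  W z - ∫ y, W (z.1, y) ∂κ z.1

/-- The conditional second moment of `W (x, y)` given `x`, where `y ∼ κ x`. -/
noncomputable def condSecondMoment (κ : Kernel X Y) (W : X × Y → ℝ) (x : X) : ℝ :=
  ∫ y, W (x, y) ^ 2 ∂κ x

variable {κ : Kernel X Y} [IsMarkovKernel κ]

lemma measurable_condDeviation {W : X × Y → ℝ} (hW : Measurable W) :
    Measurable (condDeviation κ W) :=
  hW.sub (hW.stronglyMeasurable.integral_kernel_prod_right'.measurable.comp measurable_fst)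

lemma measurable_condSecondMoment {W : X × Y → ℝ} (hW : Measurable W) :
    Measurable (condSecondMoment κ W) :=
  (hW.pow_const 2).stronglyMeasurable.integral_kernel_prod_right'.measurable

lemma abs_condDeviation_le {W : X × Y → ℝ} (hW : Measurable W) {x : X} {B : ℝ}
    (hmem : ∀ y, W (x, y) ∈ Set.Icc 0 B) (y : Y) : |condDeviation κ W (x, y)| ≤ B := by
  have hmean : ∫ y, W (x, y) ∂κ x ∈ Set.Icc 0 B :=
    integral_mem_Icc_of_mem_Icc (hW.comp measurable_prodMk_left) hmem
  exact abs_sub_le_of_nonneg_of_le (hmem y).1 (hmem y).2 hmean.1 hmean.2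

lemma condSecondMoment_mem_Icc {W : X × Y → ℝ} (hW : Measurable W) {x : X} {B : ℝ}
    (hmem : ∀ y, W (x, y) ∈ Set.Icc 0 B) : condSecondMoment κ W x ∈ Set.Icc 0 (B ^ 2) :=
  integral_mem_Icc_of_mem_Icc ((hW.comp measurable_prodMk_left).pow_const 2)
    fun y => ⟨sq_nonneg _, pow_le_pow_left₀ (hmem y).1 (hmem y).2 2⟩

lemma lintegral_compProd_le_one {ν : Measure X} [IsProbabilityMeasure ν] {f : X × Y → ENNReal}
    (hf : Measurable f) (hle : ∀ x, ∫⁻ y, f (x, y) ∂κ x ≤ 1) : ∫⁻ z, f z ∂(ν ⊗ₘ κ) ≤ 1 := by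
  rw [Measure.lintegral_compProd hf]
  exact (lintegral_mono hle).trans (by simp)

lemma lintegral_exp_condDeviation_sub_sq_le_one {ν : Measure X} [IsProbabilityMeasure ν]
    {W : X × Y → ℝ} (hmeas : Measurable W) {B : X → ℝ} (hW : ∀ x y, W (x, y) ∈ Set.Icc 0 (B x)) :
    ∫⁻ z, ENNReal.ofReal (exp (condDeviation κ W z - W z ^ 2 / 2)) ∂(ν ⊗ₘ κ) ≤ 1 := by
  have hdev := measurable_condDeviation (κ := κ) hmeas
  refine lintegral_compProd_le_one (by fun_prop) fun x => ?_
  exact lintegral_exp_sub_integral_sub_sq_le_one (fun y => (hW x y).1)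
    (Integrable.of_mem_Icc 0 (B x) (hmeas.comp measurable_prodMk_left).aemeasurable
      (Filter.Eventually.of_forall (hW x)))

lemma lintegral_exp_neg_condDeviation_sub_condSecondMoment_le_one {ν : Measure X}
    [IsProbabilityMeasure ν] {W : X × Y → ℝ} (hmeas : Measurable W) {B : X → ℝ}
    (hW : ∀ x y, W (x, y) ∈ Set.Icc 0 (B x)) :
    ∫⁻ z, ENNReal.ofReal (exp (-condDeviation κ W z - condSecondMoment κ W z.1 / 2))
      ∂(ν ⊗ₘ κ) ≤ 1 := by
  have hdev := measurable_condDeviation (κ := κ) hmeas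
  have hmom := measurable_condSecondMoment (κ := κ) hmeas
  refine lintegral_compProd_le_one (by fun_prop) fun x => ?_
  simp only [condDeviation, neg_sub]
  exact lintegral_exp_integral_sub_sub_integral_sq_le_one (fun y => (hW x y).1)
    (memLp_of_bounded (Filter.Eventually.of_forall (hW x))
      (hmeas.comp measurable_prodMk_left).aestronglyMeasurable 2)

variable {H : Type*} [MeasurableSpace H]

lemma measurable_uncurry_condDeviation {W : H → X × Y → ℝ}
    (hW : Measurable fun q : H × X × Y => W q.1 q.2) :
    Measurable fun q : H × X × Y => condDeviation κ (W q.1) q.2 :=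
  (measurable_condDeviation (κ := Kernel.prodMkLeft H κ) (W := fun r => W r.1.1 (r.1.2, r.2))
    (hW.comp (by fun_prop : Measurable fun r : (H × X) × Y => (r.1.1, r.1.2, r.2)))).comp
    (by fun_prop : Measurable fun q : H × X × Y => ((q.1, q.2.1), q.2.2))

lemma measurable_uncurry_condSecondMoment {W : H → X × Y → ℝ}
    (hW : Measurable fun q : H × X × Y => W q.1 q.2) :
    Measurable fun q : H × X => condSecondMoment κ (W q.1) q.2 :=
  measurable_condSecondMoment (κ := Kernel.prodMkLeft H κ) (W := fun r => W r.1.1 (r.1.2, r.2))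
    (hW.comp (by fun_prop : Measurable fun r : (H × X) × Y => (r.1.1, r.1.2, r.2)))

theorem measure_compl_posteriorEvent_sum_integral_le {Z : Type*} [MeasurableSpace Z]
    {μ : Measure Z} [IsProbabilityMeasure μ] {P : Measure H} [IsProbabilityMeasure P]
    {f g : H → Z → ℝ} (hf : Measurable fun q : H × Z => f q.1 q.2)
    (hg : Measurable fun q : H × Z => g q.1 q.2) {B C : Z → ℝ} (hB : ∀ h z, |f h z| ≤ B z)
    (hC : ∀ h z, g h z ∈ Set.Icc 0 (C z))
    (hexp : ∀ h, ∫⁻ z, ENNReal.ofReal (exp (f h z - g h z)) ∂μ ≤ 1)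
    {n : ℕ} {ε : ℝ} (hε : 0 < ε) :
    (Measure.pi fun _ : Fin n => μ) (posteriorEvent P fun Q ω =>
      ∑ i, ∫ h, f h (ω i) ∂Q ≤
        (klDiv Q P).toReal + log (1 / ε) + ∑ i, ∫ h, g h (ω i) ∂Q)ᶜ ≤ ENNReal.ofReal ε := by
  have hsub : Measurable fun q : H × Z => f q.1 q.2 - g q.1 q.2 := hf.sub hg
  have hterm (i : Fin n) : Measurable fun q : H × (Fin n → Z) => f q.1 (q.2 i) - g q.1 (q.2 i) :=
    hsub.comp (by fun_prop : Measurable fun q : H × (Fin n → Z) => (q.1, q.2 i))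
  refine (measure_compl_posteriorEvent_mono fun Q ω _ hQ => ?_).trans
    (measure_compl_posteriorEvent_le (f := fun h ω => ∑ i, (f h (ω i) - g h (ω i)))
      (Finset.univ.measurable_sum fun i _ => hterm i) one_pos hε fun h => ?_)
  · have hfQ (i : Fin n) : Integrable (f · (ω i)) Q :=
      .of_bound (hf.comp measurable_prodMk_right).aestronglyMeasurable (B (ω i))
        (Filter.Eventually.of_forall fun h => hB h (ω i))
    have hgQ (i : Fin n) : Integrable (g · (ω i)) Q :=
      .of_mem_Icc 0 (C (ω i)) (hg.comp measurable_prodMk_right).aemeasurable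
        (Filter.Eventually.of_forall fun h => hC h (ω i))
    have hfgQ (i : Fin n) : Integrable (fun h => f h (ω i) - g h (ω i)) Q := (hfQ i).sub (hgQ i)
    have hsum := hQ (integrable_finsetSum _ fun i _ => hfgQ i)
    rw [integral_finsetSum _ fun i _ => hfgQ i] at hsum
    simp only [integral_sub (hfQ _) (hgQ _), Finset.sum_sub_distrib] at hsum
    linarith
  · rw [lintegral_exp_sum_pi (f := fun z => f h z - g h z) (hsub.comp measurable_prodMk_left),
      ENNReal.ofReal_one]
    exact pow_le_one₀ zero_le (hexp h)

theorem measure_compl_posteriorEvent_abs_sum_integral_condDeviation_le {ν : Measure X}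
    [IsProbabilityMeasure ν] {P : Measure H} [IsProbabilityMeasure P] {W : H → X × Y → ℝ}
    (hmeas : Measurable fun q : H × X × Y => W q.1 q.2) {B : X → ℝ}
    (hW : ∀ h x y, W h (x, y) ∈ Set.Icc 0 (B x)) {n : ℕ} {ε : ℝ} (hε : 0 < ε) :
    (Measure.pi fun _ : Fin n => ν ⊗ₘ κ) (posteriorEvent P fun Q ω =>
      |∑ i, ∫ h, condDeviation κ (W h) (ω i) ∂Q| ≤ (klDiv Q P).toReal + log (2 / ε) +
        ∑ i, (∫ h, condSecondMoment κ (W h) (ω i).1 ∂Q + ∫ h, W h (ω i) ^ 2 ∂Q) / 2)ᶜ ≤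
      ENNReal.ofReal ε := by
  have hdev := measurable_uncurry_condDeviation (κ := κ) hmeas
  have hmom := measurable_uncurry_condSecondMoment (κ := κ) hmeas
  have hW_meas (h : H) : Measurable (W h) := hmeas.comp measurable_prodMk_left
  have hdev_le (h : H) (z : X × Y) : |condDeviation κ (W h) z| ≤ B z.1 :=
    abs_condDeviation_le (hW_meas h) (hW h z.1) z.2
  have hsq_mem (h : H) (z : X × Y) : W h z ^ 2 / 2 ∈ Set.Icc 0 (B z.1 ^ 2 / 2) :=
    ⟨by positivity, by have := (hW h z.1 z.2).1; have := (hW h z.1 z.2).2; gcongr⟩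
  have hmom_mem (h : H) (z : X × Y) :
      condSecondMoment κ (W h) z.1 / 2 ∈ Set.Icc 0 (B z.1 ^ 2 / 2) := by
    have := condSecondMoment_mem_Icc (κ := κ) (hW_meas h) (hW h z.1)
    exact ⟨by linarith [this.1], by linarith [this.2]⟩
  have hupper := measure_compl_posteriorEvent_sum_integral_le (P := P) (n := n) hdev
    (by fun_prop) hdev_le hsq_mem
    (fun h => lintegral_exp_condDeviation_sub_sq_le_one (ν := ν) (hW_meas h) (hW h)) (half_pos hε)
  have hlower := measure_compl_posteriorEvent_sum_integral_le (P := P) (n := n) hdev.neg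
    ((hmom.comp (by fun_prop : Measurable fun q : H × X × Y => (q.1, q.2.1))).div_const 2)
    (fun h z => (abs_neg _).trans_le (hdev_le h z)) hmom_mem
    (fun h => lintegral_exp_neg_condDeviation_sub_condSecondMoment_le_one (ν := ν)
      (hW_meas h) (hW h)) (half_pos hε)
  refine measure_compl_posteriorEvent_le_of_half hε.le hupper hlower fun Q ω _ hup hlow => ?_
  have hsq_nonneg : 0 ≤ ∑ i, ∫ h, W h (ω i) ^ 2 / 2 ∂Q :=
    Finset.sum_nonneg fun i _ => integral_nonneg fun h => (hsq_mem h (ω i)).1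
  have hmom_nonneg : 0 ≤ ∑ i, ∫ h, condSecondMoment κ (W h) (ω i).1 / 2 ∂Q :=
    Finset.sum_nonneg fun i _ => integral_nonneg fun h => (hmom_mem h (ω i)).1
  simp only [integral_neg, Finset.sum_neg_distrib, one_div_div] at hup hlow
  simp only [add_div, Finset.sum_add_distrib, ← integral_div]
  exact abs_le.2 ⟨by linarith, by linarith⟩

end SelfNormalized

section InducedPolicy

variable {X A H : Type*} [MeasurableSpace H]

/-- The policy `π_Q(a|x) = Q {h | h(x) = a}` induced by a distribution `Q` on hypotheses, where
`ev h x` is the action `h(x)`. -/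
noncomputable def inducedPolicy (ev : H → X → A) (Q : Measure H) (x : X) (a : A) : ℝ :=
  (Q {h | ev h x = a}).toReal

variable [MeasurableSpace A] [MeasurableSingletonClass A]

lemma integrable_comp_of_finite [Finite A] {μ : Measure H} [IsFiniteMeasure μ] {e : H → A}
    (he : Measurable e) (g : A → ℝ) : Integrable (fun h => g (e h)) μ :=
  (Integrable.of_finite (μ := μ.map e) (f := g)).comp_measurable he

lemma integral_comp_eq_sum_inducedPolicy [Fintype A] {ev : H → X → A} {x : X}
    (hev : Measurable (ev · x)) (Q : Measure H) [IsFiniteMeasure Q] (g : A → ℝ) :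
    ∫ h, g (ev h x) ∂Q = ∑ a, inducedPolicy ev Q x a * g a := by
  rw [← integral_map hev.aemeasurable (measurable_of_countable g).aestronglyMeasurable,
    integral_fintype .of_finite]
  refine Finset.sum_congr rfl fun a _ => ?_
  rw [smul_eq_mul, map_measureReal_apply hev (measurableSet_singleton a)]
  rfl

lemma sum_inducedPolicy [Fintype A] {ev : H → X → A} {x : X} (hev : Measurable (ev · x))
    (Q : Measure H) [IsProbabilityMeasure Q] : ∑ a, inducedPolicy ev Q x a = 1 := by
  simpa using (integral_comp_eq_sum_inducedPolicy hev Q fun _ => 1).symm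

end InducedPolicy

section InversePropensity

variable {X A : Type*} [Fintype A]

/-- The risk of a policy `ρ` with cost `c` under the context distribution `ν`. -/
noncomputable def policyRisk [MeasurableSpace X] (ν : Measure X) (c ρ : X → A → ℝ) : ℝ :=
  ∫ x, ∑ a, ρ x a * c x a ∂ν

/-- The risk of a policy `ρ` with cost `c`, averaged over the contexts of the logged sample `ω`
instead of the context distribution; the logged actions are ignored. -/
noncomputable def empiricalRisk {n : ℕ} (c ρ : X → A → ℝ) (ω : Fin n → X × A) : ℝ :=
  (n : ℝ)⁻¹ * ∑ i, ∑ a, ρ (ω i).1 a * c (ω i).1 a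

variable [MeasurableSpace A]

lemma integral_sampleMean_cost_eq_empiricalRisk {H : Type*} [MeasurableSpace H]
    [MeasurableSingletonClass A] {c : X → A → ℝ} {ev : H → X → A} {Q : Measure H}
    [IsFiniteMeasure Q] {n : ℕ} (hev : ∀ x, Measurable (ev · x)) (ω : Fin n → X × A) :
    ∫ h, (n : ℝ)⁻¹ * ∑ i, c (ω i).1 (ev h (ω i).1) ∂Q =
      empiricalRisk c (inducedPolicy ev Q) ω := by
  rw [integral_const_mul,
    integral_finsetSum _ fun i _ => integrable_comp_of_finite (hev (ω i).1) (c (ω i).1)]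
  simp only [empiricalRisk, integral_comp_eq_sum_inducedPolicy (hev _)]

variable [MeasurableSpace X]

/-- The IPS-`α` estimator of the risk of `ρ` from the logged sample `ω`. Here and below the logging
policy is given as a kernel `κ`, so that `π₀(a|x) = (κ x).real {a}`. -/
noncomputable def ipsRisk {n : ℕ} (κ : Kernel X A) (c : X → A → ℝ) (α : ℝ) (ρ : X → A → ℝ)
    (ω : Fin n → X × A) : ℝ :=
  (n : ℝ)⁻¹ * ∑ i, c (ω i).1 (ω i).2 * ρ (ω i).1 (ω i).2 / (κ (ω i).1).real {(ω i).2} ^ α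

/-- The bias term `B_n^α` of the IPS-`α` estimator. -/
noncomputable def ipsBias {n : ℕ} (κ : Kernel X A) (α : ℝ) (ρ : X → A → ℝ)
    (ω : Fin n → X × A) : ℝ :=
  1 - (n : ℝ)⁻¹ * ∑ i, ∑ a, ρ (ω i).1 a * (κ (ω i).1).real {a} ^ (1 - α)

/-- The second-moment term `V̄_n^α` of the IPS-`α` estimator. -/
noncomputable def ipsVariance {n : ℕ} (κ : Kernel X A) (c : X → A → ℝ) (α : ℝ)
    (ρ : X → A → ℝ) (ω : Fin n → X × A) : ℝ :=
  (n : ℝ)⁻¹ * ∑ i,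
    ((∑ a, (κ (ω i).1).real {a} * (ρ (ω i).1 a / (κ (ω i).1).real {a} ^ (2 * α))) +
      ρ (ω i).1 (ω i).2 * c (ω i).1 (ω i).2 ^ 2 / (κ (ω i).1).real {(ω i).2} ^ (2 * α))

lemma abs_empiricalRisk_sub_empiricalRisk_mul_rpow_le {κ : Kernel X A} [IsMarkovKernel κ]
    {c : X → A → ℝ} (hc : ∀ x a, |c x a| ≤ 1) {α : ℝ} (hα : α ≤ 1) {ρ : X → A → ℝ}
    (hρ_nonneg : ∀ x a, 0 ≤ ρ x a) (hρ_sum : ∀ x, ∑ a, ρ x a = 1) {n : ℕ} (hn : 0 < n)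
    (ω : Fin n → X × A) :
    |empiricalRisk c ρ ω - empiricalRisk (fun x a => c x a * (κ x).real {a} ^ (1 - α)) ρ ω| ≤
      ipsBias κ α ρ ω := by
  have hterm (x : X) (a : A) : |ρ x a * (c x a * (1 - (κ x).real {a} ^ (1 - α)))| ≤
      ρ x a * (1 - (κ x).real {a} ^ (1 - α)) := by
    have hpow : 0 ≤ 1 - (κ x).real {a} ^ (1 - α) :=
      sub_nonneg.2 (rpow_le_one measureReal_nonneg measureReal_le_one (sub_nonneg.2 hα))
    rw [abs_mul, abs_mul, abs_of_nonneg (hρ_nonneg x a), abs_of_nonneg hpow]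
    exact mul_le_mul_of_nonneg_left (mul_le_of_le_one_left hpow (hc x a)) (hρ_nonneg x a)
  calc _ = |(n : ℝ)⁻¹ * ∑ i, ∑ a,
          ρ (ω i).1 a * (c (ω i).1 a * (1 - (κ (ω i).1).real {a} ^ (1 - α)))| := by
        simp only [empiricalRisk, mul_sub, mul_one, Finset.sum_sub_distrib]
    _ ≤ (n : ℝ)⁻¹ * ∑ i, ∑ a, ρ (ω i).1 a * (1 - (κ (ω i).1).real {a} ^ (1 - α)) := by
        rw [abs_mul, abs_of_nonneg (by positivity : 0 ≤ (n : ℝ)⁻¹)]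
        gcongr
        exact (Finset.abs_sum_le_sum_abs _ _).trans (Finset.sum_le_sum fun i _ =>
          (Finset.abs_sum_le_sum_abs _ _).trans (Finset.sum_le_sum fun a _ => hterm _ a))
    _ = ipsBias κ α ρ ω := by
        simp only [ipsBias, mul_sub, mul_one, Finset.sum_sub_distrib, hρ_sum]
        simp [hn.ne']

end InversePropensity

section IPSLoss

variable {X A : Type*} [MeasurableSpace X] [MeasurableSpace A] [DecidableEq A]

/-- The IPS-`α` loss, on the logged pair `z = (x, a)`, of a hypothesis choosing the action `b` in
context `x`. The sign makes it nonnegative for nonpositive costs. -/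
noncomputable def ipsLoss (κ : Kernel X A) (c : X → A → ℝ) (α : ℝ) (b : A) (z : X × A) : ℝ :=
  if b = z.2 then -c z.1 b / (κ z.1).real {b} ^ α else 0

variable {κ : Kernel X A} {c : X → A → ℝ} {α : ℝ}

lemma sum_mul_ipsLoss [Fintype A] (p : A → ℝ) (z : X × A) :
    ∑ b, p b * ipsLoss κ c α b z = -(c z.1 z.2 * p z.2 / (κ z.1).real {z.2} ^ α) := by
  simp only [ipsLoss, mul_ite, mul_zero, Finset.sum_ite_eq', Finset.mem_univ, if_true]
  ring

lemma sum_mul_ipsLoss_sq [Fintype A] (p : A → ℝ) (z : X × A) :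
    ∑ b, p b * ipsLoss κ c α b z ^ 2 =
      p z.2 * c z.1 z.2 ^ 2 / (κ z.1).real {z.2} ^ (2 * α) := by
  simp only [ipsLoss, ite_pow, mul_ite, zero_pow two_ne_zero, mul_zero, Finset.sum_ite_eq',
    Finset.mem_univ, if_true]
  rw [div_pow, neg_sq, ← rpow_mul_natCast measureReal_nonneg, mul_comm α, Nat.cast_two,
    mul_div_assoc]

lemma ipsLoss_mem_Icc [Fintype A] (hc : ∀ x a, c x a ≤ 0) (b : A) (x : X) (a : A) :
    ipsLoss κ c α b (x, a) ∈ Set.Icc 0 (∑ a', -c x a' / (κ x).real {a'} ^ α) := by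
  have hnonneg (a' : A) : 0 ≤ -c x a' / (κ x).real {a'} ^ α :=
    div_nonneg (neg_nonneg.2 (hc x a')) (rpow_nonneg measureReal_nonneg α)
  unfold ipsLoss
  split_ifs
  · exact ⟨hnonneg b, Finset.single_le_sum (fun a' _ => hnonneg a') (Finset.mem_univ b)⟩
  · exact ⟨le_rfl, Finset.sum_nonneg fun a' _ => hnonneg a'⟩

variable [MeasurableSingletonClass A]

lemma integral_ipsLoss [Finite A] [IsFiniteKernel κ] {x : X} {b : A} (hpos : 0 < (κ x).real {b}) :
    ∫ a, ipsLoss κ c α b (x, a) ∂κ x = -(c x b * (κ x).real {b} ^ (1 - α)) := by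
  cases nonempty_fintype A
  rw [integral_fintype .of_finite, rpow_sub hpos, rpow_one]
  simp only [ipsLoss, smul_eq_mul, mul_ite, mul_zero, Finset.sum_ite_eq, Finset.mem_univ, if_true]
  ring

lemma integral_ipsLoss_sq [Finite A] [IsFiniteKernel κ] {x : X} {b : A} :
    ∫ a, ipsLoss κ c α b (x, a) ^ 2 ∂κ x =
      (κ x).real {b} * (c x b ^ 2 / (κ x).real {b} ^ (2 * α)) := by
  cases nonempty_fintype A
  rw [integral_fintype .of_finite]
  simp only [ipsLoss, smul_eq_mul, ite_pow, mul_ite, zero_pow two_ne_zero, mul_zero,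
    Finset.sum_ite_eq, Finset.mem_univ, if_true]
  rw [div_pow, neg_sq, ← rpow_mul_natCast measureReal_nonneg, mul_comm α, Nat.cast_two]

variable {H : Type*} [MeasurableSpace H]

lemma measurable_ipsLoss_comp [Finite A] {ev : H → X → A}
    (hev : Measurable fun q : H × X => ev q.1 q.2) (hc : ∀ a, Measurable (c · a)) :
    Measurable fun q : H × X × A => ipsLoss κ c α (ev q.1 q.2.1) q.2 := by
  have hact : Measurable fun q : H × X × A => ev q.1 q.2.1 :=
    hev.comp (by fun_prop : Measurable fun q : H × X × A => (q.1, q.2.1))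
  have hratio : Measurable fun q : X × A => -c q.1 q.2 / (κ q.1).real {q.2} ^ α :=
    measurable_from_prod_countable_left fun a =>
      (hc a).neg.div ((κ.measurable_coe (measurableSet_singleton a)).ennreal_toReal.pow_const α)
  exact Measurable.ite (measurableSet_eq_fun hact (by fun_prop))
    (hratio.comp ((by fun_prop : Measurable fun q : H × X × A => q.2.1).prodMk hact))
    measurable_const

variable {ev : H → X → A} {lam : ℝ} {Q : Measure H} [IsFiniteMeasure Q]

lemma integral_condDeviation_ipsLoss [Fintype A] [IsFiniteKernel κ] (hκ : ∀ x a, 0 < (κ x).real {a})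
    (hev : ∀ x, Measurable (ev · x)) (z : X × A) :
    ∫ h, condDeviation κ (fun z => lam * ipsLoss κ c α (ev h z.1) z) z ∂Q =
      lam * (∑ a, inducedPolicy ev Q z.1 a * (c z.1 a * (κ z.1).real {a} ^ (1 - α)) -
        c z.1 z.2 * inducedPolicy ev Q z.1 z.2 / (κ z.1).real {z.2} ^ α) := by
  simp only [condDeviation, integral_const_mul, integral_ipsLoss (hκ _ _)]
  rw [integral_comp_eq_sum_inducedPolicy (hev z.1) Q fun b =>
    lam * ipsLoss κ c α b z - lam * -(c z.1 b * (κ z.1).real {b} ^ (1 - α))]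
  have hloss := sum_mul_ipsLoss (κ := κ) (c := c) (α := α) (inducedPolicy ev Q z.1) z
  simp only [← mul_sub, mul_left_comm _ lam, ← Finset.mul_sum]
  simp only [mul_sub, Finset.sum_sub_distrib, hloss, mul_neg, Finset.sum_neg_distrib]
  ring

lemma integral_condSecondMoment_ipsLoss_le [Fintype A] [IsFiniteKernel κ] (hc : ∀ x a, |c x a| ≤ 1)
    (hev : ∀ x, Measurable (ev · x)) (x : X) :
    ∫ h, condSecondMoment κ (fun z => lam * ipsLoss κ c α (ev h z.1) z) x ∂Q ≤
      lam ^ 2 * ∑ a, (κ x).real {a} * (inducedPolicy ev Q x a / (κ x).real {a} ^ (2 * α)) := by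
  simp only [condSecondMoment, mul_pow, integral_const_mul, integral_ipsLoss_sq]
  rw [integral_comp_eq_sum_inducedPolicy (hev x) Q fun b =>
    (κ x).real {b} * (c x b ^ 2 / (κ x).real {b} ^ (2 * α))]
  refine mul_le_mul_of_nonneg_left (Finset.sum_le_sum fun a _ => ?_) (sq_nonneg lam)
  calc inducedPolicy ev Q x a * ((κ x).real {a} * (c x a ^ 2 / (κ x).real {a} ^ (2 * α)))
      = c x a ^ 2 * ((κ x).real {a} * (inducedPolicy ev Q x a / (κ x).real {a} ^ (2 * α))) := by
        ring
    _ ≤ (κ x).real {a} * (inducedPolicy ev Q x a / (κ x).real {a} ^ (2 * α)) :=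
        mul_le_of_le_one_left (mul_nonneg measureReal_nonneg
          (div_nonneg ENNReal.toReal_nonneg (rpow_nonneg measureReal_nonneg _)))
          (sq_le_one_iff_abs_le_one _ |>.2 (hc x a))

lemma integral_sq_ipsLoss [Finite A] (hev : ∀ x, Measurable (ev · x)) (z : X × A) :
    ∫ h, (lam * ipsLoss κ c α (ev h z.1) z) ^ 2 ∂Q =
      lam ^ 2 * (inducedPolicy ev Q z.1 z.2 * c z.1 z.2 ^ 2 / (κ z.1).real {z.2} ^ (2 * α)) := by
  cases nonempty_fintype A
  simp only [mul_pow, integral_const_mul]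
  rw [integral_comp_eq_sum_inducedPolicy (hev z.1) Q fun b => ipsLoss κ c α b z ^ 2,
    sum_mul_ipsLoss_sq]

lemma sum_integral_condDeviation_ipsLoss [Fintype A] [IsFiniteKernel κ] {n : ℕ} (hn : 0 < n)
    (hκ : ∀ x a, 0 < (κ x).real {a}) (hev : ∀ x, Measurable (ev · x)) (ω : Fin n → X × A) :
    ∑ i, ∫ h, condDeviation κ (fun z => lam * ipsLoss κ c α (ev h z.1) z) (ω i) ∂Q =
      n * lam * (empiricalRisk (fun x a => c x a * (κ x).real {a} ^ (1 - α))
        (inducedPolicy ev Q) ω - ipsRisk κ c α (inducedPolicy ev Q) ω) := by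
  simp only [integral_condDeviation_ipsLoss hκ hev, empiricalRisk, ipsRisk, ← Finset.mul_sum,
    Finset.sum_sub_distrib]
  field_simp

lemma sum_integral_ipsLoss_moments_le [Fintype A] [IsFiniteKernel κ] {n : ℕ} (hn : 0 < n)
    (hc : ∀ x a, |c x a| ≤ 1) (hev : ∀ x, Measurable (ev · x)) (ω : Fin n → X × A) :
    ∑ i, (∫ h, condSecondMoment κ (fun z => lam * ipsLoss κ c α (ev h z.1) z) (ω i).1 ∂Q +
        ∫ h, (lam * ipsLoss κ c α (ev h (ω i).1) (ω i)) ^ 2 ∂Q) / 2 ≤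
      n * lam * (lam / 2 * ipsVariance κ c α (inducedPolicy ev Q) ω) := by
  refine (Finset.sum_le_sum fun i _ => div_le_div_of_nonneg_right (add_le_add
    (integral_condSecondMoment_ipsLoss_le hc hev (ω i).1)
    (integral_sq_ipsLoss hev (ω i)).le) zero_le_two).trans_eq ?_
  simp only [ipsVariance, ← mul_add, ← Finset.mul_sum, ← Finset.sum_div]
  field_simp

end IPSLoss

section PACBayes

variable {X A H : Type*} [MeasurableSpace X] [MeasurableSpace A] [MeasurableSingletonClass A]
  [MeasurableSpace H] {c : X → A → ℝ} {ev : H → X → A} {P : Measure H} {n : ℕ} {ν : Measure X}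
  {κ : Kernel X A} {α lam : ℝ}

lemma measurable_cost_comp [Finite A] (hc_meas : ∀ a, Measurable (c · a))
    (hev : Measurable fun q : H × X => ev q.1 q.2) :
    Measurable fun q : H × X => c q.2 (ev q.1 q.2) :=
  (measurable_from_prod_countable_left hc_meas : Measurable fun r : X × A => c r.1 r.2).comp
    (measurable_snd.prodMk hev)

variable [Fintype A]

lemma integral_integral_cost_eq_policyRisk [IsProbabilityMeasure ν] {Q : Measure H}
    [IsProbabilityMeasure Q] (hc_meas : ∀ a, Measurable (c · a)) {C : ℝ}
    (hc : ∀ x a, |c x a| ≤ C) (hev : Measurable fun q : H × X => ev q.1 q.2) :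
    ∫ h, ∫ x, c x (ev h x) ∂ν ∂Q = policyRisk ν c (inducedPolicy ev Q) := by
  have hev_x (x : X) : Measurable (ev · x) := hev.comp measurable_prodMk_right
  rw [integral_integral_swap (.of_bound (measurable_cost_comp hc_meas hev).aestronglyMeasurable C
    (Filter.Eventually.of_forall fun q => hc q.2 _))]
  exact integral_congr_ae (Filter.Eventually.of_forall fun x =>
    integral_comp_eq_sum_inducedPolicy (hev_x x) Q (c x))

theorem measure_compl_posteriorEvent_abs_policyRisk_sub_empiricalRisk_le
    [IsProbabilityMeasure ν] [IsMarkovKernel κ] [IsProbabilityMeasure P]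
    (hc_meas : ∀ a, Measurable (c · a)) (hc : ∀ x a, c x a ∈ Set.Icc (-1 : ℝ) 0)
    (hev : Measurable fun q : H × X => ev q.1 q.2) (hn : 0 < n) {ε : ℝ} (hε : 0 < ε) :
    (Measure.pi fun _ : Fin n => ν ⊗ₘ κ) (posteriorEvent P fun Q ω =>
      |policyRisk ν c (inducedPolicy ev Q) - empiricalRisk c (inducedPolicy ev Q) ω| ≤
        √(((klDiv Q P).toReal + log (2 * √n / ε)) / (2 * n)))ᶜ ≤ ENNReal.ofReal ε := by
  have hcost : Measurable fun q : H × X => c q.2 (ev q.1 q.2) := measurable_cost_comp hc_meas hev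
  have hmean (h : H) : ∫ z, c z.1 (ev h z.1) ∂(ν ⊗ₘ κ) = ∫ x, c x (ev h x) ∂ν := by
    conv_rhs => rw [← Measure.fst_compProd ν κ]
    exact (integral_map measurable_fst.aemeasurable
      (hcost.comp measurable_prodMk_left).aestronglyMeasurable).symm
  refine (measure_compl_posteriorEvent_mono fun Q ω _ hQ => ?_).trans
    (measure_compl_posteriorEvent_abs_integral_sampleMean_sub_le (μ := ν ⊗ₘ κ) neg_one_lt_zero
      (hcost.comp (by fun_prop : Measurable fun q : H × X × A => (q.1, q.2.1)))
      (fun h z => hc z.1 (ev h z.1)) hn hε)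
  have hc_abs (x : X) (a : A) : |c x a| ≤ 1 :=
    abs_le.2 ⟨(hc x a).1, (hc x a).2.trans zero_le_one⟩
  have hev_x (x : X) : Measurable (ev · x) := hev.comp measurable_prodMk_right
  have hmean_int : Integrable (fun h => ∫ x, c x (ev h x) ∂ν) Q :=
    .of_mem_Icc (-1) 0 hcost.stronglyMeasurable.integral_prod_right.measurable.aemeasurable
      (Filter.Eventually.of_forall fun h =>
        integral_mem_Icc_of_mem_Icc (hcost.comp measurable_prodMk_left) fun x => hc x (ev h x))
  simp only [hmean] at hQ
  rw [integral_sub ((integrable_finsetSum _ fun i _ => integrable_comp_of_finite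
      (hev_x (ω i).1) (c (ω i).1)).const_mul _) hmean_int,
    integral_sampleMean_cost_eq_empiricalRisk hev_x, integral_integral_cost_eq_policyRisk hc_meas
      hc_abs hev] at hQ
  simpa [abs_sub_comm] using hQ

theorem measure_compl_posteriorEvent_abs_empiricalRisk_sub_ipsRisk_le
    [IsProbabilityMeasure ν] [IsMarkovKernel κ] [IsProbabilityMeasure P]
    (hκ : ∀ x a, 0 < (κ x).real {a})
    (hc_meas : ∀ a, Measurable (c · a)) (hc : ∀ x a, c x a ∈ Set.Icc (-1 : ℝ) 0)
    (hev : Measurable fun q : H × X => ev q.1 q.2) (hlam : 0 < lam) (hn : 0 < n) {ε : ℝ}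
    (hε : 0 < ε) :
    (Measure.pi fun _ : Fin n => ν ⊗ₘ κ) (posteriorEvent P fun Q ω =>
      |empiricalRisk (fun x a => c x a * (κ x).real {a} ^ (1 - α)) (inducedPolicy ev Q) ω -
          ipsRisk κ c α (inducedPolicy ev Q) ω| ≤
        ((klDiv Q P).toReal + log (2 / ε)) / (n * lam) +
          lam / 2 * ipsVariance κ c α (inducedPolicy ev Q) ω)ᶜ ≤ ENNReal.ofReal ε := by
  classical
  have hc_abs (x : X) (a : A) : |c x a| ≤ 1 :=
    abs_le.2 ⟨(hc x a).1, (hc x a).2.trans zero_le_one⟩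
  have hev_x (x : X) : Measurable (ev · x) := hev.comp measurable_prodMk_right
  refine (measure_compl_posteriorEvent_mono fun Q ω _ hQ => ?_).trans
    (measure_compl_posteriorEvent_abs_sum_integral_condDeviation_le
      (W := fun h z => lam * ipsLoss κ c α (ev h z.1) z)
      ((measurable_ipsLoss_comp hev hc_meas).const_mul lam)
      (B := fun x => lam * ∑ a, -c x a / (κ x).real {a} ^ α) (fun h x a => ?_) hε)
  · have hnlam : 0 < n * lam := by positivity
    have hvariance := sum_integral_ipsLoss_moments_le (κ := κ) (lam := lam) (α := α) (Q := Q) hn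
      hc_abs hev_x ω
    rw [sum_integral_condDeviation_ipsLoss hn hκ hev_x, abs_mul, abs_of_pos hnlam] at hQ
    rw [div_add' _ _ _ hnlam.ne', le_div_iff₀' hnlam]
    linarith
  · have hmem := ipsLoss_mem_Icc (κ := κ) (α := α) (fun x a => (hc x a).2) (ev h x) x a
    exact ⟨mul_nonneg hlam.le hmem.1, mul_le_mul_of_nonneg_left hmem.2 hlam.le⟩

lemma ofReal_one_sub_le_measure {Ω : Type*} [MeasurableSpace Ω] {μ : Measure Ω}
    [IsProbabilityMeasure μ] {S : Set Ω} {δ : ℝ} (hδ : 0 ≤ δ) (hS : μ Sᶜ ≤ ENNReal.ofReal δ) :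
    ENNReal.ofReal (1 - δ) ≤ μ S := by
  rw [ENNReal.ofReal_sub 1 hδ, ENNReal.ofReal_one, tsub_le_iff_right, ← measure_univ (μ := μ)]
  exact (measure_univ_le_add_compl S).trans (add_le_add_right hS _)

theorem pac_bayes_ips_alpha_general [IsProbabilityMeasure ν]
    [IsMarkovKernel κ] [IsProbabilityMeasure P] (hκ : ∀ x a, 0 < (κ x).real {a})
    (hc_meas : ∀ a, Measurable (c · a)) (hc : ∀ x a, c x a ∈ Set.Icc (-1 : ℝ) 0)
    (hev : Measurable fun q : H × X => ev q.1 q.2) (hlam : 0 < lam) (hn : 0 < n) {δ : ℝ}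
    (hδ : 0 < δ) (hα : α ≤ 1) :
    ENNReal.ofReal (1 - δ) ≤
      (Measure.pi fun _ : Fin n => ν ⊗ₘ κ) (posteriorEvent P fun Q ω =>
        |policyRisk ν c (inducedPolicy ev Q) - ipsRisk κ c α (inducedPolicy ev Q) ω| ≤
          √(((klDiv Q P).toReal + log (4 * √n / δ)) / (2 * n)) +
            ipsBias κ α (inducedPolicy ev Q) ω +
            ((klDiv Q P).toReal + log (4 / δ)) / (n * lam) +
            lam / 2 * ipsVariance κ c α (inducedPolicy ev Q) ω) := by
  have hc_abs (x : X) (a : A) : |c x a| ≤ 1 :=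
    abs_le.2 ⟨(hc x a).1, (hc x a).2.trans zero_le_one⟩
  have hsampling := measure_compl_posteriorEvent_abs_policyRisk_sub_empiricalRisk_le (P := P)
    (ν := ν) (κ := κ) hc_meas hc hev hn (half_pos hδ)
  have hweighting := measure_compl_posteriorEvent_abs_empiricalRisk_sub_ipsRisk_le (P := P)
    (ν := ν) (α := α) hκ hc_meas hc hev hlam hn (half_pos hδ)
  refine ofReal_one_sub_le_measure hδ.le
    (measure_compl_posteriorEvent_le_of_half hδ.le hsampling hweighting
      fun Q ω _ hsamp hweight => ?_)
  have hev_x (x : X) : Measurable (ev · x) := hev.comp measurable_prodMk_right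
  set ρ := inducedPolicy ev Q
  have hbias := abs_empiricalRisk_sub_empiricalRisk_mul_rpow_le (κ := κ) (ρ := ρ) hc_abs hα
    (fun _ _ => ENNReal.toReal_nonneg) (fun x => sum_inducedPolicy (hev_x x) Q) hn ω
  rw [show 2 * √(n : ℝ) / (δ / 2) = 4 * √n / δ by ring] at hsamp
  rw [show (2 : ℝ) / (δ / 2) = 4 / δ by ring] at hweight
  linarith [abs_sub_le (policyRisk ν c ρ) (empiricalRisk c ρ ω) (ipsRisk κ c α ρ ω),
    abs_sub_le (empiricalRisk c ρ ω)
      (empiricalRisk (fun x a => c x a * (κ x).real {a} ^ (1 - α)) ρ ω) (ipsRisk κ c α ρ ω)]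

end PACBayes

/-- **Main theorem (two-sided PAC-Bayes generalization bound for IPS-α).** -/
theorem pac_bayes_ips_alpha
    {X : Type*} [MeasurableSpace X] {K : ℕ}
    {H : Type*} [MeasurableSpace H]
    (ν : Measure X) [IsProbabilityMeasure ν]
    (p0 c : X → Fin K → ℝ)
    (hp0meas : ∀ a, Measurable fun x => p0 x a)
    (hcmeas : ∀ a, Measurable fun x => c x a)
    (hp0pos : ∀ x a, 0 < p0 x a) (hp0sum : ∀ x, ∑ a, p0 x a = 1)
    (hc : ∀ x a, c x a ∈ Set.Icc (-1 : ℝ) 0)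
    (ev : H → X → Fin K)
    (hev : Measurable fun q : H × X => ev q.1 q.2)
    (κ0 : Kernel X (Fin K)) [IsMarkovKernel κ0]
    (hκ0 : ∀ x a, κ0 x {a} = ENNReal.ofReal (p0 x a))
    (P : Measure H) [IsProbabilityMeasure P]
    (lam : ℝ) (hlam : 0 < lam) (n : ℕ) (hn : 1 ≤ n)
    (δ : ℝ) (hδ : δ ∈ Set.Ioo (0 : ℝ) 1) (α : ℝ) (hα : α ∈ Set.Icc (0 : ℝ) 1) :
    ENNReal.ofReal (1 - δ) ≤
      (Measure.pi fun _ : Fin n => ν ⊗ₘ κ0)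
        {ω | ∀ Q : Measure H, IsProbabilityMeasure Q → klDiv Q P ≠ ⊤ →
          |(∫ x, ∑ a, (Q {h | ev h x = a}).toReal * c x a ∂ν)
              - (n : ℝ)⁻¹ * ∑ i, c (ω i).1 (ω i).2 * (Q {h | ev h (ω i).1 = (ω i).2}).toReal
                  / p0 (ω i).1 (ω i).2 ^ α|
            ≤ Real.sqrt (((klDiv Q P).toReal + Real.log (4 * Real.sqrt n / δ)) / (2 * n))
              + (1 - (n : ℝ)⁻¹ * ∑ i, ∑ a,
                  (Q {h | ev h (ω i).1 = a}).toReal * p0 (ω i).1 a ^ (1 - α))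
              + ((klDiv Q P).toReal + Real.log (4 / δ)) / (n * lam)
              + lam / 2 * ((n : ℝ)⁻¹ * ∑ i,
                  ((∑ a, p0 (ω i).1 a *
                      ((Q {h | ev h (ω i).1 = a}).toReal / p0 (ω i).1 a ^ (2 * α)))
                    + (Q {h | ev h (ω i).1 = (ω i).2}).toReal * c (ω i).1 (ω i).2 ^ 2
                        / p0 (ω i).1 (ω i).2 ^ (2 * α)))} := by
  obtain rfl : p0 = fun x a => (κ0 x).real {a} := by
    ext x a
    rw [Measure.real, hκ0, ENNReal.toReal_ofReal (hp0pos x a).le]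
  exact pac_bayes_ips_alpha_general hp0pos hcmeas hc hev hlam hn hδ.1 hα.2
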